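/- Assume d1 < x_T < d2 and that x⁰_{x,s}(t) ∈ (d1,d2) for every x ∈ (d1,d2), every 0 ≤ s < T and every t ∈ [s,T]. Then the set S of strongly regular points is open and dense in (d1,d2)×[0,T), and its complement (d1,d2)×[0,T) \ S has two-dimensional Lebesgue measure zero. -/

import Mathlib

/-- The deterministic trajectory `x⁰_{x,s}`. -/
noncomputable def traj (a0 a1 T xT x s t : ℝ) : ℝ :=
  (x + a0 / a1) * Real.sinh (a1 * (T - t)) / Real.sinh (a1 * (T - s)) +
    (xT + a0 / a1) * Real.sinh (a1 * (t - s)) / Real.sinh (a1 * (T - s)) - a0 / a1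

/-- The two-point cost `u(x,s;d,t)`. -/
noncomputable def cost (a0 a1 T xT x s d t : ℝ) : ℝ :=
  a1 * Real.sinh (a1 * (T - s)) * (d - traj a0 a1 T xT x s t) ^ 2 /
    (2 * Real.sinh (a1 * (T - t)) * Real.sinh (a1 * (t - s)))

/-- The exit cost `u(x,s) = inf { u(x,s;d,t) : d ∈ {d1,d2}, t ∈ (s,T) }`. -/
noncomputable def uval (a0 a1 T xT d1 d2 x s : ℝ) : ℝ :=
  sInf {r : ℝ | ∃ d, (d = d1 ∨ d = d2) ∧ ∃ t ∈ Set.Ioo s T, r = cost a0 a1 T xT x s d t}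

/-- The auxiliary function `g(x,s;d,t)`. -/
noncomputable def gfun (a0 a1 T xT x s d t : ℝ) : ℝ :=
  a1 * ((d + a0 / a1) * Real.sinh (a1 * (2 * t - T - s)) +
    (x + a0 / a1) * Real.sinh (a1 * (T - t)) -
    (xT + a0 / a1) * Real.sinh (a1 * (t - s)))

/-- `(x,s)` is strongly regular with optimal exit pair `(dm, νm)`: the exit cost
`u(x,s)` is positive, the minimum of `(d,t) ↦ u(x,s;d,t)` over `{d1,d2} × (s,T)` is
attained at the unique point `(dm, νm)`, and `∂²u(x,s;dm,t)/∂t²` is positive at `t = νm`. -/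
def StronglyRegularAt (a0 a1 T xT d1 d2 x s dm νm : ℝ) : Prop :=
  0 < uval a0 a1 T xT d1 d2 x s ∧
  (dm = d1 ∨ dm = d2) ∧ νm ∈ Set.Ioo s T ∧
  (∀ d, (d = d1 ∨ d = d2) → ∀ t ∈ Set.Ioo s T,
    cost a0 a1 T xT x s dm νm ≤ cost a0 a1 T xT x s d t) ∧
  (∀ d, (d = d1 ∨ d = d2) → ∀ t ∈ Set.Ioo s T, (d, t) ≠ (dm, νm) →
    cost a0 a1 T xT x s dm νm < cost a0 a1 T xT x s d t) ∧
  0 < deriv (deriv (fun t => cost a0 a1 T xT x s dm t)) νm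


/-!
Put `S τ = sinh (a τ) / a` (`nsinh`), which is positive for `τ > 0` whatever the sign of `a`. Then
`cost = N² / (2 S(T-s) S(T-t) S(t-s))`, where `N = (d - x⁰(t)) S(T-s)` (`gap`) is affine in `x`. The
assumption that the trajectories stay in `(d1, d2)` says that `N < 0` for `d = d1` and `N > 0` for
`d = d2`. Hence `1 / cost` is continuous on `[s, T]`, vanishes at both ends and is positive inside,
so minimizers exist.

The complement is null: the strongly regular set is relatively open, hence measurable, and by Fubini
it suffices to treat each fixed `s`. There `√cost` is affine in `x` for each `(d, t)`, with a slope
that determines `(d, t)`; its infimum over `(d, t)` is concave in `x`, so the minimizer is unique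
for all but countably many `x` (`countable_opt_ties`). Next, `∂cost/∂t` is a nonzero multiple of `N`
times a function `g` (`crit`), so at a degenerate minimizer `g = ∂g/∂t = 0`. As `g` is affine in `x`,
this exhibits `x` as a critical value of a smooth function of `t`, and Sard's theorem shows that such
`x` form a null set (`degenerate_null`).

Openness (`eventually_stronglyRegular`): by compactness, minimizers for nearby starting points are
close to the original one, where the cost is strictly convex in `t`. Density follows from nullity of
the complement, since nonempty open sets have positive measure.
-/

/-! ### Closed forms for the cost and its derivative -/

/-- The normalized hyperbolic sine `sinh (a τ) / a`, positive for `τ > 0` when `a ≠ 0`. -/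
noncomputable def nsinh (a τ : ℝ) : ℝ := Real.sinh (a * τ) / a

/-- The numerator `(d - x⁰_{x,s}(t)) * nsinh a (T - s)`, with `c` standing for `a0 / a` and `z` for
`xT + a0 / a`; see `sub_traj`. -/
noncomputable def gap (a c T z x s d t : ℝ) : ℝ :=
  (d + c) * nsinh a (T - s) - (x + c) * nsinh a (T - t) - z * nsinh a (t - s)

/-- The factor of `∂cost/∂t` whose zeros are the critical times (`cost_hasDerivAt`), with `c`
standing for `a0 / a` and `z` for `xT + a0 / a`. It equals `gfun` divided by `a ^ 2`. -/
noncomputable def crit (a c T z x s d t : ℝ) : ℝ :=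
  (d + c) * nsinh a (2 * t - T - s) + (x + c) * nsinh a (T - t) - z * nsinh a (t - s)

theorem nsinh_pos {a τ : ℝ} (ha : a ≠ 0) (hτ : 0 < τ) : 0 < nsinh a τ := by
  unfold nsinh
  rcases lt_or_gt_of_ne ha with h | h
  · exact div_pos_of_neg_of_neg (Real.sinh_neg_iff.2 (mul_neg_of_neg_of_pos h hτ)) h
  · exact div_pos (Real.sinh_pos_iff.2 (mul_pos h hτ)) h

@[simp] theorem nsinh_zero (a : ℝ) : nsinh a 0 = 0 := by simp [nsinh]

theorem nsinh_nonneg {a τ : ℝ} (ha : a ≠ 0) (hτ : 0 ≤ τ) : 0 ≤ nsinh a τ := by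
  rcases hτ.eq_or_lt with h | h
  · simp [← h]
  · exact (nsinh_pos ha h).le

theorem nsinh_eq_zero {a τ : ℝ} (ha : a ≠ 0) (h : nsinh a τ = 0) : τ = 0 := by
  simpa [nsinh, ha] using h

theorem nsinh_add {a : ℝ} (u v : ℝ) :
    nsinh a (u + v) = nsinh a u * Real.cosh (a * v) + Real.cosh (a * u) * nsinh a v := by
  unfold nsinh
  rw [mul_add, Real.sinh_add]
  ring

theorem nsinh_sub {a : ℝ} (u v : ℝ) :
    nsinh a (u - v) = nsinh a u * Real.cosh (a * v) - Real.cosh (a * u) * nsinh a v := by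
  unfold nsinh
  rw [mul_sub, Real.sinh_sub]
  ring

@[fun_prop] theorem nsinh_continuous (a : ℝ) : Continuous (nsinh a) := by
  unfold nsinh; fun_prop

theorem HasDerivAt.nsinh {a : ℝ} (ha : a ≠ 0) {f : ℝ → ℝ} {f' t : ℝ} (hf : HasDerivAt f f' t) :
    HasDerivAt (fun t => nsinh a (f t)) (Real.cosh (a * f t) * f') t := by
  have := ((hf.const_mul a).sinh).div_const a
  refine HasDerivAt.congr_deriv (this) ?_
  field_simp

theorem sub_traj {a0 a T xT x s d t : ℝ} (ha : a ≠ 0) (hs : s < T) :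
    d - traj a0 a T xT x s t =
      gap a (a0 / a) T (xT + a0 / a) x s d t / nsinh a (T - s) := by
  have h := (nsinh_pos ha (sub_pos.2 hs)).ne'
  have h' : Real.sinh (a * (T - s)) ≠ 0 := fun h0 => h (by simp [nsinh, h0])
  generalize hc : a0 / a = c
  unfold traj gap nsinh
  rw [hc]
  field_simp
  ring

theorem cost_eq {a0 a T xT x s d t : ℝ} (ha : a ≠ 0) (hs : s < T) :
    cost a0 a T xT x s d t = gap a (a0 / a) T (xT + a0 / a) x s d t ^ 2 /
      (2 * nsinh a (T - s) * (nsinh a (T - t) * nsinh a (t - s))) := by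
  have h := (nsinh_pos ha (sub_pos.2 hs)).ne'
  have e : ∀ τ, Real.sinh (a * τ) = a * nsinh a τ := fun τ => by unfold nsinh; field_simp
  unfold cost
  rw [sub_traj ha hs, e, e, e]
  generalize gap a (a0 / a) T (xT + a0 / a) x s d t = g
  generalize nsinh a (T - s) = u at *
  rw [show a * (a * u) * (g / u) ^ 2 = (a * a) * (g ^ 2 / u) by field_simp,
    show 2 * (a * nsinh a (T - t)) * (a * nsinh a (t - s)) =
      (a * a) * (2 * (nsinh a (T - t) * nsinh a (t - s))) by ring,
    mul_div_mul_left _ _ (mul_ne_zero ha ha), div_div]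
  congr 1
  ring

theorem gap_hasDerivAt {a c T z x s d t : ℝ} (ha : a ≠ 0) :
    HasDerivAt (fun t => gap a c T z x s d t)
      ((x + c) * Real.cosh (a * (T - t)) - z * Real.cosh (a * (t - s))) t := by
  have h1 := (((hasDerivAt_id t).const_sub T).nsinh ha).const_mul (x + c)
  have h2 := (((hasDerivAt_id t).sub_const s).nsinh ha).const_mul z
  refine HasDerivAt.congr_deriv ((h1.const_sub ((d + c) * nsinh a (T - s))).sub h2) ?_
  simp only [id]
  ring

theorem crit_hasDerivAt {a c T z x s d t : ℝ} (ha : a ≠ 0) :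
    HasDerivAt (fun t => crit a c T z x s d t)
      (2 * (d + c) * Real.cosh (a * (2 * t - T - s)) - (x + c) * Real.cosh (a * (T - t)) -
        z * Real.cosh (a * (t - s))) t := by
  have h0 := (((((hasDerivAt_id t).const_mul 2).sub_const T).sub_const s).nsinh ha).const_mul (d + c)
  have h1 := (((hasDerivAt_id t).const_sub T).nsinh ha).const_mul (x + c)
  have h2 := (((hasDerivAt_id t).sub_const s).nsinh ha).const_mul z
  refine HasDerivAt.congr_deriv ((h0.add h1).sub h2) ?_
  simp only [id]
  ring

theorem nsinh_prod_hasDerivAt {a T s t : ℝ} (ha : a ≠ 0) :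
    HasDerivAt (fun t => nsinh a (T - t) * nsinh a (t - s))
      (nsinh a (T - t) * Real.cosh (a * (t - s)) - Real.cosh (a * (T - t)) * nsinh a (t - s)) t := by
  have h1 := (((hasDerivAt_id t).const_sub T).nsinh ha)
  have h2 := (((hasDerivAt_id t).sub_const s).nsinh ha)
  refine HasDerivAt.congr_deriv (h1.mul h2) ?_
  simp only [id]
  ring

theorem cost_hasDerivAt {a0 a T xT x s d t : ℝ} (ha : a ≠ 0) (ht : t ∈ Set.Ioo s T) :
    HasDerivAt (fun t => cost a0 a T xT x s d t)
      (gap a (a0 / a) T (xT + a0 / a) x s d t * crit a (a0 / a) T (xT + a0 / a) x s d t /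
        (2 * (nsinh a (T - t) * nsinh a (t - s)) ^ 2)) t := by
  have hs : s < T := ht.1.trans ht.2
  have p0 := (nsinh_pos ha (sub_pos.2 hs)).ne'
  have p1 := (nsinh_pos ha (sub_pos.2 ht.1)).ne'
  have p2 := (nsinh_pos ha (sub_pos.2 ht.2)).ne'
  simp only [cost_eq ha hs]
  have hg := gap_hasDerivAt (c := a0 / a) (T := T) (z := xT + a0 / a) (x := x) (s := s) (d := d)
    (t := t) ha
  have hb := (nsinh_prod_hasDerivAt (T := T) (s := s) (t := t) ha).const_mul (2 * nsinh a (T - s))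
  refine HasDerivAt.congr_deriv ((hg.fun_pow 2).fun_div hb (by positivity)) ?_
  have e1 : nsinh a (T - s) = nsinh a (T - t) * Real.cosh (a * (t - s)) +
      Real.cosh (a * (T - t)) * nsinh a (t - s) := by
    rw [← nsinh_add]; congr 1; ring
  have e2 : nsinh a (2 * t - T - s) = nsinh a (t - s) * Real.cosh (a * (T - t)) -
      Real.cosh (a * (t - s)) * nsinh a (T - t) := by
    rw [← nsinh_sub]; congr 1; ring
  rw [div_eq_div_iff (by positivity) (by positivity)]
  unfold crit
  rw [e2]
  have hgap : gap a (a0 / a) T (xT + a0 / a) x s d t = (d + a0 / a) * nsinh a (T - s)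
    - (x + a0 / a) * nsinh a (T - t) - (xT + a0 / a) * nsinh a (t - s) := rfl
  generalize gap a (a0 / a) T (xT + a0 / a) x s d t = g at *
  rw [e1] at hgap ⊢
  generalize a0 / a = c at *
  generalize nsinh a (T - t) = A at *
  generalize nsinh a (t - s) = B at *
  generalize Real.cosh (a * (T - t)) = P at *
  generalize Real.cosh (a * (t - s)) = Q at *
  simp only [Nat.cast_ofNat, Nat.add_one_sub_one, pow_one]
  have : (A * Q + P * B) * ((d + c) * (B * P - Q * A) + (x + c) * A - (xT + c) * B) =
    2 * ((x + c) * P - (xT + c) * Q) * (A * B) - g * (A * Q - P * B) := by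
    rw [hgap]; ring
  linear_combination (-4 * g * (A*B)^2 * (A * Q + P * B)) * this

section

open Set Filter Topology

/-! ### Continuity and existence of minimizers -/

theorem gap_continuous {a c T z d : ℝ} :
    Continuous (fun q : (ℝ × ℝ) × ℝ => gap a c T z q.1.1 q.1.2 d q.2) := by
  unfold gap; fun_prop

theorem crit_continuous {a c T z d : ℝ} :
    Continuous (fun q : (ℝ × ℝ) × ℝ => crit a c T z q.1.1 q.1.2 d q.2) := by
  unfold crit; fun_prop

theorem cost_pos {a0 a T xT x s d t : ℝ} (ha : a ≠ 0) (ht : t ∈ Ioo s T)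
    (hg : gap a (a0 / a) T (xT + a0 / a) x s d t ≠ 0) : 0 < cost a0 a T xT x s d t := by
  have hs : s < T := ht.1.trans ht.2
  have p0 := nsinh_pos ha (sub_pos.2 hs)
  have p1 := nsinh_pos ha (sub_pos.2 ht.1)
  have p2 := nsinh_pos ha (sub_pos.2 ht.2)
  rw [cost_eq ha hs]
  positivity

/-- The reciprocal of the cost extends continuously to the endpoints `t = s` and `t = T`, with the
value `0`. The conventions `x / 0 = 0` and `0⁻¹ = 0` give exactly this value, so the reciprocal of
`cost` can be used on the closed interval `[s, T]`, which makes compactness available. -/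
theorem cost_inv_continuousAt {a0 a T xT d : ℝ} (ha : a ≠ 0) {q₀ : (ℝ × ℝ) × ℝ} (hs : q₀.1.2 < T)
    (hg : gap a (a0 / a) T (xT + a0 / a) q₀.1.1 q₀.1.2 d q₀.2 ≠ 0) :
    ContinuousAt (fun q : (ℝ × ℝ) × ℝ => (cost a0 a T xT q.1.1 q.1.2 d q.2)⁻¹) q₀ := by
  have h : ContinuousAt (fun q : (ℝ × ℝ) × ℝ =>
      (2 * nsinh a (T - q.1.2) * (nsinh a (T - q.2) * nsinh a (q.2 - q.1.2))) /
        gap a (a0 / a) T (xT + a0 / a) q.1.1 q.1.2 d q.2 ^ 2) q₀ :=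
    ContinuousAt.div (by fun_prop) (gap_continuous.continuousAt.pow 2) (pow_ne_zero 2 hg)
  refine h.congr ?_
  have : ∀ᶠ q : (ℝ × ℝ) × ℝ in 𝓝 q₀, q.1.2 < T :=
    ContinuousAt.eventually_lt (by fun_prop) continuousAt_const hs
  filter_upwards [this] with q hq
  rw [cost_eq ha hq, inv_div]

/-- The value at the endpoint `t = s` comes from the convention `x / 0 = 0`. -/
theorem cost_left {a0 a T xT x s d : ℝ} : cost a0 a T xT x s d s = 0 := by simp [cost]

/-- The value at the endpoint `t = T` comes from the convention `x / 0 = 0`. -/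
theorem cost_right {a0 a T xT x s d : ℝ} : cost a0 a T xT x s d T = 0 := by simp [cost]

theorem exists_min_cost {a0 a T xT x s d : ℝ} (ha : a ≠ 0) (hs : s < T)
    (hg : ∀ t ∈ Icc s T, gap a (a0 / a) T (xT + a0 / a) x s d t ≠ 0) :
    ∃ t ∈ Ioo s T, ∀ t' ∈ Ioo s T, cost a0 a T xT x s d t ≤ cost a0 a T xT x s d t' := by
  have hc : ContinuousOn (fun t => (cost a0 a T xT x s d t)⁻¹) (Icc s T) := fun t ht =>
    (ContinuousAt.comp (f := fun t : ℝ => ((x, s), t)) (x := t)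
      (cost_inv_continuousAt (q₀ := ((x, s), t)) ha hs (hg t ht))
      (by fun_prop)).continuousWithinAt
  obtain ⟨t, ht, hmax⟩ := isCompact_Icc.exists_isMaxOn (nonempty_Icc.2 hs.le) hc
  have key : ∀ t' ∈ Ioo s T, 0 < cost a0 a T xT x s d t' := fun t' ht' =>
    cost_pos ha ht' (hg t' (Ioo_subset_Icc_self ht'))
  have hpos : 0 < (cost a0 a T xT x s d t)⁻¹ := by
    obtain ⟨m, hm⟩ := nonempty_Ioo.2 hs
    exact (inv_pos.2 (key m hm)).trans_le (hmax (Ioo_subset_Icc_self hm))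
  have ht' : t ∈ Ioo s T := by
    refine ⟨lt_of_le_of_ne ht.1 ?_, lt_of_le_of_ne ht.2 ?_⟩
    · rintro rfl
      simp [cost_left] at hpos
    · rintro rfl
      simp [cost_right] at hpos
  exact ⟨t, ht', fun t' h => (inv_le_inv₀ (key t' h) (key t ht')).1
    (hmax (Ioo_subset_Icc_self h))⟩

/-- The closed form of the second `t`-derivative of the cost, as produced by the quotient rule from
`cost_hasDerivAt`. -/
noncomputable def costTT (a0 a T xT x s d t : ℝ) : ℝ :=
  ((((x + a0 / a) * Real.cosh (a * (T - t)) - (xT + a0 / a) * Real.cosh (a * (t - s))) *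
      crit a (a0 / a) T (xT + a0 / a) x s d t +
    gap a (a0 / a) T (xT + a0 / a) x s d t *
      (2 * (d + a0 / a) * Real.cosh (a * (2 * t - T - s)) -
        (x + a0 / a) * Real.cosh (a * (T - t)) - (xT + a0 / a) * Real.cosh (a * (t - s)))) *
    (2 * (nsinh a (T - t) * nsinh a (t - s)) ^ 2) -
    gap a (a0 / a) T (xT + a0 / a) x s d t * crit a (a0 / a) T (xT + a0 / a) x s d t *
      (2 * (2 * (nsinh a (T - t) * nsinh a (t - s)) *
        (nsinh a (T - t) * Real.cosh (a * (t - s)) -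
          Real.cosh (a * (T - t)) * nsinh a (t - s))))) /
    (2 * (nsinh a (T - t) * nsinh a (t - s)) ^ 2) ^ 2

theorem deriv_deriv_cost {a0 a T xT x s d t : ℝ} (ha : a ≠ 0) (ht : t ∈ Ioo s T) :
    deriv (deriv (fun t => cost a0 a T xT x s d t)) t = costTT a0 a T xT x s d t := by
  have p1 := (nsinh_pos ha (sub_pos.2 ht.1)).ne'
  have p2 := (nsinh_pos ha (sub_pos.2 ht.2)).ne'
  have h : deriv (fun t => cost a0 a T xT x s d t) =ᶠ[𝓝 t] _ :=
    (isOpen_Ioo.mem_nhds ht : Ioo s T ∈ 𝓝 t) |> fun h => by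
      filter_upwards [h] with t' ht'
      exact (cost_hasDerivAt ha ht').deriv
  rw [h.deriv_eq]
  refine HasDerivAt.deriv ?_
  have hb := ((nsinh_prod_hasDerivAt (T := T) (s := s) (t := t) ha).fun_pow 2).const_mul 2
  refine HasDerivAt.congr_deriv (((gap_hasDerivAt ha).fun_mul (crit_hasDerivAt ha)).fun_div hb
    (by positivity)) ?_
  simp [costTT]

theorem costTT_continuousAt {a0 a T xT d : ℝ} (ha : a ≠ 0) {q₀ : (ℝ × ℝ) × ℝ}
    (ht : q₀.2 ∈ Ioo q₀.1.2 T) :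
    ContinuousAt (fun q : (ℝ × ℝ) × ℝ => costTT a0 a T xT q.1.1 q.1.2 d q.2) q₀ := by
  have p1 := (nsinh_pos ha (sub_pos.2 ht.1)).ne'
  have p2 := (nsinh_pos ha (sub_pos.2 ht.2)).ne'
  unfold costTT
  have h1 := gap_continuous (a := a) (c := a0 / a) (T := T) (z := xT + a0 / a) (d := d)
  have h2 := crit_continuous (a := a) (c := a0 / a) (T := T) (z := xT + a0 / a) (d := d)
  refine ContinuousAt.div (Continuous.continuousAt ?_) (Continuous.continuousAt ?_) (by positivity)
  all_goals fun_prop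

theorem eventually_costTT_pos {a0 a T xT d : ℝ} (ha : a ≠ 0) {q₀ : (ℝ × ℝ) × ℝ}
    (ht : q₀.2 ∈ Ioo q₀.1.2 T)
    (hpos : 0 < deriv (deriv (fun t => cost a0 a T xT q₀.1.1 q₀.1.2 d t)) q₀.2) :
    ∀ᶠ q : (ℝ × ℝ) × ℝ in 𝓝 q₀, q.2 ∈ Ioo q.1.2 T ∧
      0 < deriv (deriv (fun t => cost a0 a T xT q.1.1 q.1.2 d t)) q.2 := by
  rw [deriv_deriv_cost ha ht] at hpos
  have h1 : ∀ᶠ q : (ℝ × ℝ) × ℝ in 𝓝 q₀, q.1.2 < q.2 :=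
    ContinuousAt.eventually_lt (by fun_prop) (by fun_prop) ht.1
  have h2 : ∀ᶠ q : (ℝ × ℝ) × ℝ in 𝓝 q₀, q.2 < T :=
    ContinuousAt.eventually_lt (by fun_prop) continuousAt_const ht.2
  filter_upwards [h1, h2, (costTT_continuousAt (a0 := a0) (xT := xT) (d := d) ha ht).eventually
    (lt_mem_nhds hpos)] with q h1 h2 h3
  exact ⟨⟨h1, h2⟩, by rwa [deriv_deriv_cost ha ⟨h1, h2⟩]⟩

/-- A strict inequality between costs over a compact set `K` of exit times persists for nearby
starting points. Times outside the moving interval `(s, T)` are ignored, and near its endpoints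
the reciprocal of the cost is close to `0`. -/
theorem eventually_cost_lt {a0 a T xT d₀ ν₀ d : ℝ} (ha : a ≠ 0) {p₀ : ℝ × ℝ}
    (hν : ν₀ ∈ Ioo p₀.2 T)
    (hg₀ : gap a (a0 / a) T (xT + a0 / a) p₀.1 p₀.2 d₀ ν₀ ≠ 0)
    (hg : ∀ t ∈ Icc p₀.2 T, gap a (a0 / a) T (xT + a0 / a) p₀.1 p₀.2 d t ≠ 0)
    {K : Set ℝ} (hK : IsCompact K)
    (hlt : ∀ t ∈ K, t ∈ Ioo p₀.2 T →
      cost a0 a T xT p₀.1 p₀.2 d₀ ν₀ < cost a0 a T xT p₀.1 p₀.2 d t) :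
    ∀ᶠ p in 𝓝 p₀, ∀ t ∈ K, t ∈ Ioo p.2 T →
      cost a0 a T xT p.1 p.2 d₀ ν₀ < cost a0 a T xT p.1 p.2 d t := by
  have hs : p₀.2 < T := hν.1.trans hν.2
  refine hK.eventually_forall_of_forall_eventually fun t htK => ?_
  by_cases ht : t ∈ Icc p₀.2 T
  · have c1 := cost_inv_continuousAt (q₀ := (p₀, t)) ha hs (hg t ht)
    have c2 : ContinuousAt (fun q : (ℝ × ℝ) × ℝ => (cost a0 a T xT q.1.1 q.1.2 d₀ ν₀)⁻¹)
        (p₀, t) :=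
      ContinuousAt.comp (f := fun q : (ℝ × ℝ) × ℝ => (q.1, ν₀)) (x := (p₀, t))
        (cost_inv_continuousAt (q₀ := (p₀, ν₀)) ha hs hg₀) (by fun_prop)
    have h0 : (cost a0 a T xT p₀.1 p₀.2 d t)⁻¹ < (cost a0 a T xT p₀.1 p₀.2 d₀ ν₀)⁻¹ := by
      have pos := cost_pos ha hν hg₀
      rcases ht.1.eq_or_lt with h | h
      · rw [← h, cost_left, inv_zero]; exact inv_pos.2 pos
      rcases ht.2.eq_or_lt with h' | h'
      · rw [h', cost_right, inv_zero]; exact inv_pos.2 pos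
      · exact inv_strictAnti₀ pos (hlt t htK ⟨h, h'⟩)
    have e1 := ContinuousAt.eventually_lt c1 c2 h0
    have e2 : ∀ᶠ q : (ℝ × ℝ) × ℝ in 𝓝 (p₀, t),
        gap a (a0 / a) T (xT + a0 / a) q.1.1 q.1.2 d q.2 ≠ 0 :=
      gap_continuous.continuousAt.eventually_ne (hg t ht)
    have e3 : ∀ᶠ q : (ℝ × ℝ) × ℝ in 𝓝 (p₀, t),
        gap a (a0 / a) T (xT + a0 / a) q.1.1 q.1.2 d₀ ν₀ ≠ 0 :=
      ContinuousAt.eventually_ne (Continuous.continuousAt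
        (gap_continuous.comp (f := fun q : (ℝ × ℝ) × ℝ => (q.1, ν₀)) (by fun_prop))) hg₀
    have e4 : ∀ᶠ q : (ℝ × ℝ) × ℝ in 𝓝 (p₀, t), q.1.2 < ν₀ :=
      ContinuousAt.eventually_lt (by fun_prop) continuousAt_const hν.1
    filter_upwards [e1, e2, e3, e4] with q h1 h2 h3 h4 h5
    exact (inv_lt_inv₀ (cost_pos ha h5 h2) (cost_pos ha ⟨h4, hν.2⟩ h3)).1 h1
  · have hne : ∀ᶠ q : (ℝ × ℝ) × ℝ in 𝓝 (p₀, t), q.2 ∉ Ioo q.1.2 T := by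
      rcases not_and_or.1 ht with h | h
      · have : ∀ᶠ q : (ℝ × ℝ) × ℝ in 𝓝 (p₀, t), q.2 < q.1.2 :=
          ContinuousAt.eventually_lt (by fun_prop) (by fun_prop) (not_le.1 h)
        filter_upwards [this] with q hq h
        exact hq.not_gt h.1
      · have : ∀ᶠ q : (ℝ × ℝ) × ℝ in 𝓝 (p₀, t), T < q.2 :=
          ContinuousAt.eventually_lt (by fun_prop) (by fun_prop) (not_le.1 h)
        filter_upwards [this] with q hq h
        exact hq.not_gt h.2
    filter_upwards [hne] with q hq h
    exact absurd h hq

/-! ### Uniqueness of the optimal exit pair up to countably many `x` -/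

/-- Among affine functions of one real variable, only countably many points admit two minimizing
members of different slopes: the lower envelope is concave, so the intervals between the two
slopes at different points are disjoint. -/
theorem countable_ties {ι : Type*} [Nonempty ι] (J : Set ι) (D : Set ℝ) (α m : ι → ℝ) :
    {x ∈ D | ∃ i ∈ J, ∃ j ∈ J, m i ≠ m j ∧ (∀ k ∈ J, α i + m i * x ≤ α k + m k * x) ∧
      ∀ k ∈ J, α j + m j * x ≤ α k + m k * x}.Countable := by
  set A := {x ∈ D | ∃ i ∈ J, ∃ j ∈ J, m i ≠ m j ∧ (∀ k ∈ J, α i + m i * x ≤ α k + m k * x) ∧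
      ∀ k ∈ J, α j + m j * x ≤ α k + m k * x} with hA
  have hex : ∀ x ∈ A, ∃ i j : ι, i ∈ J ∧ j ∈ J ∧ m i < m j ∧
      (∀ k ∈ J, α i + m i * x ≤ α k + m k * x) ∧ ∀ k ∈ J, α j + m j * x ≤ α k + m k * x := by
    rintro x ⟨-, i, hi, j, hj, hne, h1, h2⟩
    rcases lt_or_gt_of_ne hne with h | h
    · exact ⟨i, j, hi, hj, h, h1, h2⟩
    · exact ⟨j, i, hj, hi, h, h2, h1⟩
  choose! f g hf hg hlt hfm hgm using hex
  have key : ∀ x ∈ A, ∀ y ∈ A, x < y → m (g y) ≤ m (f x) := by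
    intro x hx y hy hxy
    have e1 := hfm x hx (g y) (hg y hy)
    have e2 := hgm y hy (f x) (hf x hx)
    by_contra! h
    nlinarith [mul_pos (sub_pos.2 h) (sub_pos.2 hxy)]
  refine PairwiseDisjoint.countable_of_isOpen (s := fun x => Ioo (m (f x)) (m (g x))) ?_
    (fun _ _ => isOpen_Ioo) (fun x hx => nonempty_Ioo.2 (hlt x hx))
  intro x hx y hy hne
  refine Set.disjoint_left.2 fun v hv hv' => ?_
  rcases lt_or_gt_of_ne hne with h | h
  · exact absurd (key x hx y hy h) (by linarith [hv.1, hv'.2])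
  · exact absurd (key y hy x hx h) (by linarith only [hv'.1, hv.2, key y hy x hx h])

/-- `(d, t)` minimizes the two-point cost over `{d1, d2} × (s, T)` for the starting point
`(x, s)`. -/
def IsOpt (a0 a T xT d1 d2 x s d t : ℝ) : Prop :=
  (d = d1 ∨ d = d2) ∧ t ∈ Ioo s T ∧ ∀ e, (e = d1 ∨ e = d2) → ∀ u ∈ Ioo s T,
    cost a0 a T xT x s d t ≤ cost a0 a T xT x s e u

/-- For a fixed `s`, the minimizer is non-unique for at most countably many `x`. Where `gap` is
negative for `d1` and positive for `d2`, the square root of the cost is affine in `x`, and its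
slope determines `(d, t)`. -/
theorem countable_opt_ties {a0 a T xT d1 d2 s : ℝ} (ha : a ≠ 0) (h12 : d1 < d2)
    (hs : s < T)
    (h1 : ∀ x ∈ Ioo d1 d2, ∀ t ∈ Icc s T, gap a (a0 / a) T (xT + a0 / a) x s d1 t < 0)
    (h2 : ∀ x ∈ Ioo d1 d2, ∀ t ∈ Icc s T, 0 < gap a (a0 / a) T (xT + a0 / a) x s d2 t) :
    {x ∈ Ioo d1 d2 | ∃ d t d' t', (d', t') ≠ (d, t) ∧ IsOpt a0 a T xT d1 d2 x s d t ∧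
      IsOpt a0 a T xT d1 d2 x s d' t'}.Countable := by
  set c := a0 / a with hc
  -- `σ d * gap` is the absolute value of `gap`
  set σ : ℝ → ℝ := fun d => if d = d1 then -1 else 1 with hσ
  set B : ℝ → ℝ := fun t => 2 * nsinh a (T - s) * (nsinh a (T - t) * nsinh a (t - s)) with hB
  have σ1 : σ d1 = -1 := by simp [hσ]
  have σ2 : σ d2 = 1 := by simp [hσ, h12.ne']
  have S0 := nsinh_pos ha (sub_pos.2 hs)
  have Sl : ∀ t ∈ Ioo s T, 0 < nsinh a (t - s) := fun t ht => nsinh_pos ha (sub_pos.2 ht.1)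
  have Sr : ∀ t ∈ Ioo s T, 0 < nsinh a (T - t) := fun t ht => nsinh_pos ha (sub_pos.2 ht.2)
  have Bp : ∀ t ∈ Ioo s T, 0 < B t := fun t ht => by
    have := Sl t ht; have := Sr t ht
    simp only [hB]; positivity
  -- intercept and slope of the square root of the cost, as an affine function of `x`
  set α : ℝ × ℝ → ℝ := fun k =>
    σ k.1 * ((k.1 + c) * nsinh a (T - s) - c * nsinh a (T - k.2) -
      (xT + c) * nsinh a (k.2 - s)) / √(B k.2) with hα
  set m : ℝ × ℝ → ℝ := fun k => -(σ k.1 * nsinh a (T - k.2) / √(B k.2)) with hm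
  set J : Set (ℝ × ℝ) := {k | (k.1 = d1 ∨ k.1 = d2) ∧ k.2 ∈ Ioo s T} with hJ
  have haff : ∀ x k, α k + m k * x = σ k.1 * gap a c T (xT + c) x s k.1 k.2 / √(B k.2) := by
    intro x k
    simp only [hα, hm, gap]
    ring
  have hnn : ∀ x ∈ Ioo d1 d2, ∀ k ∈ J, 0 ≤ α k + m k * x := by
    rintro x hx ⟨d, t⟩ ⟨hd, ht⟩
    rw [haff]
    refine div_nonneg ?_ (Real.sqrt_nonneg _)
    rcases hd with rfl | rfl
    · dsimp only; rw [σ1]; linarith [h1 x hx t (Ioo_subset_Icc_self ht)]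
    · dsimp only; rw [σ2]; linarith [h2 x hx t (Ioo_subset_Icc_self ht)]
  have hsq : ∀ x, ∀ k ∈ J, (α k + m k * x) ^ 2 = cost a0 a T xT x s k.1 k.2 := by
    rintro x ⟨d, t⟩ ⟨hd, ht⟩
    have : σ d ^ 2 = 1 := by
      rcases hd with rfl | rfl
      · rw [σ1]; norm_num
      · rw [σ2]; norm_num
    rw [haff, cost_eq ha hs, div_pow, mul_pow, Real.sq_sqrt (Bp t ht).le]
    dsimp only
    rw [this, one_mul]
  have hopt : ∀ x ∈ Ioo d1 d2, ∀ d t, IsOpt a0 a T xT d1 d2 x s d t →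
      (d, t) ∈ J ∧ ∀ k ∈ J, α (d, t) + m (d, t) * x ≤ α k + m k * x := by
    intro x hx d t h
    have hk : (d, t) ∈ J := ⟨h.1, h.2.1⟩
    refine ⟨hk, fun k hkJ => ?_⟩
    rw [← sq_le_sq₀ (hnn x hx _ hk) (hnn x hx _ hkJ), hsq x _ hk, hsq x _ hkJ]
    exact h.2.2 k.1 hkJ.1 k.2 hkJ.2
  have hinj : ∀ k ∈ J, ∀ l ∈ J, m k = m l → k = l := by
    rintro ⟨d, t⟩ ⟨hd, ht⟩ ⟨d', t'⟩ ⟨hd', ht'⟩ hml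
    dsimp only at hd hd' ht ht'
    have q : 0 < nsinh a (T - t) / √(B t) := div_pos (Sr t ht) (Real.sqrt_pos.2 (Bp t ht))
    have q' : 0 < nsinh a (T - t') / √(B t') := div_pos (Sr t' ht') (Real.sqrt_pos.2 (Bp t' ht'))
    have hml' : σ d * (nsinh a (T - t) / √(B t)) = σ d' * (nsinh a (T - t') / √(B t')) := by
      simp only [hm, neg_inj] at hml
      simpa only [mul_div_assoc] using hml
    have hdd : d = d' ∧ nsinh a (T - t) / √(B t) = nsinh a (T - t') / √(B t') := by
      rcases hd with rfl | rfl <;> rcases hd' with rfl | rfl <;> simp only [σ1, σ2] at hml' <;>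
        first
        | exact ⟨rfl, by linarith⟩
        | exact absurd hml' (by linarith)
    have e := congrArg (· ^ 2) hdd.2
    simp only [div_pow] at e
    rw [Real.sq_sqrt (Bp t ht).le, Real.sq_sqrt (Bp t' ht').le,
      div_eq_div_iff (Bp t ht).ne' (Bp t' ht').ne'] at e
    have r := (Sr t ht).ne'
    have r' := (Sr t' ht').ne'
    have e1 : nsinh a (T - t) * nsinh a (t' - s) = nsinh a (T - t') * nsinh a (t - s) := by
      have : (2 * nsinh a (T - s) * nsinh a (T - t) * nsinh a (T - t')) ≠ 0 := by positivity
      apply mul_left_cancel₀ this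
      simp only [hB] at e
      linear_combination e
    -- `e1` says that `nsinh (T - t) / nsinh (t - s)` is the same at both times, and
    -- `nsinh (T - t) nsinh (t' - s) - nsinh (T - t') nsinh (t - s) =
    -- nsinh (t' - t) nsinh (T - s)`
    have e2 : nsinh a (t' - t) * nsinh a (T - s) = 0 := by
      have x1 : t' - s = (t' - t) + (t - s) := by ring
      have x2 : T - t = (T - t') + (t' - t) := by ring
      have x3 : T - s = (T - t') + ((t' - t) + (t - s)) := by ring
      rw [x1, x2] at e1
      rw [x3]
      simp only [nsinh_add, mul_add, Real.cosh_add] at e1 ⊢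
      have ch : Real.cosh (a * (t' - t)) ^ 2 = 1 + (a * nsinh a (t' - t)) ^ 2 := by
        rw [Real.cosh_sq]; unfold nsinh; field_simp; ring
      have sh : ∀ u, Real.sinh (a * u) = a * nsinh a u := fun u => by unfold nsinh; field_simp
      simp only [sh] at e1 ⊢
      linear_combination e1 - nsinh a (T - t') * nsinh a (t - s) * ch
    have e3 := nsinh_eq_zero ha ((mul_eq_zero.1 e2).resolve_right S0.ne')
    rw [hdd.1, sub_eq_zero.1 e3]
  refine (countable_ties J (Ioo d1 d2) α m).mono ?_
  rintro x ⟨hx, d, t, d', t', hne, ho, ho'⟩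
  obtain ⟨k1, k2⟩ := hopt x hx d t ho
  obtain ⟨l1, l2⟩ := hopt x hx d' t' ho'
  exact ⟨hx, _, k1, _, l1, fun h => hne (hinj _ k1 _ l1 h).symm, k2, l2⟩

/-! ### Degenerate minimizers -/

/-- At a minimizer where the second derivative of the cost is not positive, `crit` and its
`t`-derivative both vanish. -/
theorem crit_degenerate {a0 a T xT d1 d2 x s d t : ℝ} (ha : a ≠ 0)
    (hg : gap a (a0 / a) T (xT + a0 / a) x s d t ≠ 0) (ho : IsOpt a0 a T xT d1 d2 x s d t)
    (hd : ¬ 0 < deriv (deriv (fun t => cost a0 a T xT x s d t)) t) :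
    crit a (a0 / a) T (xT + a0 / a) x s d t = 0 ∧
      2 * (d + a0 / a) * Real.cosh (a * (2 * t - T - s)) - (x + a0 / a) * Real.cosh (a * (T - t)) -
        (xT + a0 / a) * Real.cosh (a * (t - s)) = 0 := by
  have ht := ho.2.1
  have p1 := (nsinh_pos ha (sub_pos.2 ht.1)).ne'
  have p2 := (nsinh_pos ha (sub_pos.2 ht.2)).ne'
  have hder := cost_hasDerivAt (a0 := a0) (xT := xT) (x := x) (d := d) ha ht
  have hmin : IsLocalMin (fun t => cost a0 a T xT x s d t) t := by
    filter_upwards [isOpen_Ioo.mem_nhds ht] with t' ht'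
    exact ho.2.2 d ho.1 t' ht'
  have hc : crit a (a0 / a) T (xT + a0 / a) x s d t = 0 := by
    have := hmin.hasDerivAt_eq_zero hder
    rw [div_eq_zero_iff] at this
    rcases this with h | h
    · exact (mul_eq_zero.1 h).resolve_left hg
    · exact absurd h (by positivity)
  refine ⟨hc, ?_⟩
  have h0 : deriv (deriv (fun t => cost a0 a T xT x s d t)) t = 0 := by
    refine le_antisymm (not_lt.1 hd) (not_lt.1 fun hneg => ?_)
    -- a strictly negative second derivative would make `t` a local maximum as well, so the cost
    -- would be locally constant
    have hmax := isLocalMax_of_deriv_deriv_neg hneg hmin.deriv_eq_zero hder.continuousAt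
    have hev : (fun t => cost a0 a T xT x s d t) =ᶠ[𝓝 t] fun _ => cost a0 a T xT x s d t := by
      filter_upwards [hmin, hmax] with u h1 h2 using le_antisymm h2 h1
    have := hev.deriv.deriv_eq
    simp at this
    exact hneg.ne this
  rw [deriv_deriv_cost ha ht, costTT, hc, div_eq_zero_iff] at h0
  rcases h0 with h | h
  · simp only [mul_zero, zero_add, zero_mul, sub_zero, mul_eq_zero] at h
    rcases h with (h | h) | h
    · exact absurd h hg
    · exact h
    · simp [p1, p2] at h
  · exact absurd h (by positivity)

/-- The equation `crit = 0` determines `x` as a function `X` of `t`; when the `t`-derivative of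
`crit` vanishes as well, `x` is a critical value of `X`, and Sard's theorem applies. -/
theorem degenerate_null {a c T z s d : ℝ} (ha : a ≠ 0) :
    MeasureTheory.volume {x : ℝ | ∃ t ∈ Ioo s T, crit a c T z x s d t = 0 ∧
      2 * (d + c) * Real.cosh (a * (2 * t - T - s)) - (x + c) * Real.cosh (a * (T - t)) -
        z * Real.cosh (a * (t - s)) = 0} = 0 := by
  set X : ℝ → ℝ := fun t =>
    (z * nsinh a (t - s) - (d + c) * nsinh a (2 * t - T - s)) / nsinh a (T - t) - c with hX
  set Z : Set ℝ := {t ∈ Ioo s T | HasDerivAt X 0 t} with hZ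
  have sard : MeasureTheory.volume (X '' Z) = 0 :=
    MeasureTheory.addHaar_image_eq_zero_of_det_fderivWithin_eq_zero MeasureTheory.volume
      (f' := fun _ => (0 : ℝ →L[ℝ] ℝ))
      (fun t ht => by
        have := ht.2.hasFDerivAt.hasFDerivWithinAt (s := Z)
        simpa using this)
      (fun t _ => by simp [ContinuousLinearMap.det])
  refine MeasureTheory.measure_mono_null ?_ sard
  rintro x ⟨t, ht, h0, h0'⟩
  have p2 := (nsinh_pos ha (sub_pos.2 ht.2)).ne'
  have hM : z * nsinh a (t - s) - (d + c) * nsinh a (2 * t - T - s) =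
      (x + c) * nsinh a (T - t) := by
    unfold crit at h0; linear_combination -h0
  refine ⟨t, ⟨ht, ?_⟩, ?_⟩
  · have k1 := (((hasDerivAt_id t).sub_const s).nsinh ha).const_mul z
    have k2 := (((((hasDerivAt_id t).const_mul 2).sub_const T).sub_const s).nsinh ha).const_mul
      (d + c)
    have k3 := (((hasDerivAt_id t).const_sub T).nsinh ha)
    refine HasDerivAt.congr_deriv (((k1.fun_sub k2).fun_div k3 p2).sub_const c) ?_
    simp only [id]
    rw [hM, div_eq_zero_iff]
    left
    linear_combination (-nsinh a (T - t)) * h0'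
  · simp only [hX]
    rw [hM]
    field_simp
    ring

/-! ### Strong regularity is an open condition -/

theorem IsOpt.stronglyRegularAt {a0 a T xT d1 d2 x s d t : ℝ} (ha : a ≠ 0)
    (ho : IsOpt a0 a T xT d1 d2 x s d t)
    (hg : gap a (a0 / a) T (xT + a0 / a) x s d t ≠ 0)
    (huniq : ∀ d' t', IsOpt a0 a T xT d1 d2 x s d' t' → (d', t') = (d, t))
    (hpos : 0 < deriv (deriv (fun t => cost a0 a T xT x s d t)) t) :
    StronglyRegularAt a0 a T xT d1 d2 x s d t := by
  refine ⟨?_, ho.1, ho.2.1, ho.2.2, ?_, hpos⟩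
  · have : IsLeast {r : ℝ | ∃ d, (d = d1 ∨ d = d2) ∧ ∃ t ∈ Set.Ioo s T,
        r = cost a0 a T xT x s d t} (cost a0 a T xT x s d t) := by
      refine ⟨⟨d, ho.1, t, ho.2.1, rfl⟩, ?_⟩
      rintro r ⟨d', hd', t', ht', rfl⟩
      exact ho.2.2 d' hd' t' ht'
    rw [uval, this.csInf_eq]
    exact cost_pos ha ho.2.1 hg
  · intro d' hd' t' ht' hne
    by_contra! hle
    exact hne (huniq d' t' ⟨hd', ht', fun e he u hu => hle.trans (ho.2.2 e he u hu)⟩)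

theorem exists_isOpt {a0 a T xT d1 d2 x s : ℝ} (ha : a ≠ 0) (hs : s < T)
    (hg : ∀ d, (d = d1 ∨ d = d2) → ∀ t ∈ Icc s T,
      gap a (a0 / a) T (xT + a0 / a) x s d t ≠ 0) :
    ∃ d t, IsOpt a0 a T xT d1 d2 x s d t := by
  obtain ⟨t1, ht1, m1⟩ := exists_min_cost ha hs (hg d1 (Or.inl rfl))
  obtain ⟨t2, ht2, m2⟩ := exists_min_cost ha hs (hg d2 (Or.inr rfl))
  rcases le_total (cost a0 a T xT x s d1 t1) (cost a0 a T xT x s d2 t2) with h | h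
  · refine ⟨d1, t1, Or.inl rfl, ht1, ?_⟩
    rintro d' (rfl | rfl) t' ht'
    · exact m1 t' ht'
    · exact h.trans (m2 t' ht')
  · refine ⟨d2, t2, Or.inr rfl, ht2, ?_⟩
    rintro d' (rfl | rfl) t' ht'
    · exact h.trans (m1 t' ht')
    · exact m2 _ ‹_›

/-- Near a strongly regular point all minimizers stay close to the original one, where the cost is
strictly convex in `t`; hence the minimizer remains unique and nondegenerate. -/
theorem eventually_stronglyRegular {a0 a T xT d1 d2 : ℝ} (ha : a ≠ 0)
    (hg : ∀ x ∈ Ioo d1 d2, ∀ s, 0 ≤ s → s < T → ∀ d, (d = d1 ∨ d = d2) → ∀ t ∈ Icc s T,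
      gap a (a0 / a) T (xT + a0 / a) x s d t ≠ 0)
    {p₀ : ℝ × ℝ} (hp₀ : p₀ ∈ Ioo d1 d2 ×ˢ Ico 0 T) {d₀ ν₀ : ℝ}
    (hreg : StronglyRegularAt a0 a T xT d1 d2 p₀.1 p₀.2 d₀ ν₀) :
    ∀ᶠ p in 𝓝 p₀, p ∈ Ioo d1 d2 ×ˢ Ico 0 T →
      ∃ d t, StronglyRegularAt a0 a T xT d1 d2 p.1 p.2 d t := by
  obtain ⟨-, hd₀, hν₀, -, hlt, hpos⟩ := hreg
  have hg₀ := hg p₀.1 hp₀.1 p₀.2 hp₀.2.1 hp₀.2.2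
  obtain ⟨P, hP, Q, hQ, hPQ⟩ := eventually_prod_iff.1
    (nhds_prod_eq (x := p₀) (y := ν₀) ▸ eventually_costTT_pos (q₀ := (p₀, ν₀)) ha hν₀ hpos)
  obtain ⟨ε, hε, hball⟩ := Metric.eventually_nhds_iff_ball.1 hQ
  -- away from `(d₀, ν₀)` the pair `(d₀, ν₀)` stays strictly better, uniformly in `t`
  have hK : ∀ d, (d = d1 ∨ d = d2) → ∀ᶠ p in 𝓝 p₀,
      ∀ t ∈ Icc 0 T ∩ {t | d = d₀ → ε ≤ dist t ν₀}, t ∈ Ioo p.2 T →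
      cost a0 a T xT p.1 p.2 d₀ ν₀ < cost a0 a T xT p.1 p.2 d t := by
    intro d hd
    refine eventually_cost_lt ha hν₀ (hg₀ d₀ hd₀ ν₀ (Ioo_subset_Icc_self hν₀)) (hg₀ d hd)
      (isCompact_Icc.inter_right ?_) ?_
    · by_cases h : d = d₀
      · simp only [h, true_imp_iff]
        exact isClosed_le continuous_const (by fun_prop)
      · simp [h]
    · rintro t ⟨-, ht⟩ ht'
      refine hlt d hd t ht' fun he => ?_
      simp only [Prod.mk.injEq] at he
      have := ht he.1
      rw [he.2, dist_self] at this
      exact hε.not_ge this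
  have hνp : ∀ᶠ p : ℝ × ℝ in 𝓝 p₀, p.2 < ν₀ :=
    ContinuousAt.eventually_lt (by fun_prop) continuousAt_const hν₀.1
  filter_upwards [hP, hK d1 (Or.inl rfl), hK d2 (Or.inr rfl), hνp] with p hPp hK1 hK2 hν hp
  have loc : ∀ d t, IsOpt a0 a T xT d1 d2 p.1 p.2 d t → d = d₀ ∧ t ∈ Metric.ball ν₀ ε := by
    intro d t ho
    by_contra hcon
    have hmem : t ∈ Icc 0 T ∩ {t | d = d₀ → ε ≤ dist t ν₀} := by
      refine ⟨⟨hp.2.1.trans ho.2.1.1.le, ho.2.1.2.le⟩, fun h => ?_⟩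
      by_contra! h'
      exact hcon ⟨h, h'⟩
    have h1 := ho.2.2 d₀ hd₀ ν₀ ⟨hν, hν₀.2⟩
    rcases ho.1 with h | h
    · rw [h] at hmem h1; exact (hK1 t hmem ho.2.1).not_ge h1
    · rw [h] at hmem h1; exact (hK2 t hmem ho.2.1).not_ge h1
  have hin : ∀ t ∈ Metric.ball ν₀ ε, t ∈ Ioo p.2 T ∧
      0 < deriv (deriv (fun t => cost a0 a T xT p.1 p.2 d₀ t)) t := fun t ht =>
    hPQ hPp (hball t ht)
  have hconv : StrictConvexOn ℝ (Metric.ball ν₀ ε) (fun t => cost a0 a T xT p.1 p.2 d₀ t) :=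
    strictConvexOn_of_deriv2_pos' (convex_ball ν₀ ε)
      (fun t ht => (cost_hasDerivAt ha (hin t ht).1).continuousAt.continuousWithinAt)
      (fun t ht => (hin t ht).2)
  obtain ⟨d, t, ho⟩ := exists_isOpt (a0 := a0) (xT := xT) (d1 := d1) (d2 := d2) ha hp.2.2
    (hg p.1 hp.1 p.2 hp.2.1 hp.2.2)
  obtain ⟨rfl, ht⟩ := loc d t ho
  refine ⟨d, t, ho.stronglyRegularAt ha (hg p.1 hp.1 p.2 hp.2.1 hp.2.2 d ho.1 t
    (Ioo_subset_Icc_self ho.2.1)) ?_ (hin t ht).2⟩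
  intro d' t' ho'
  obtain ⟨rfl, ht'⟩ := loc d' t' ho'
  have : t' = t := hconv.eq_of_isMinOn
    (fun u hu => ho'.2.2 _ ho'.1 u (hin u hu).1) (fun u hu => ho.2.2 _ ho.1 u (hin u hu).1) ht' ht
  rw [this]

/-! ### The exceptional set on a line `s = const` -/

/-- For a fixed `s`, the points that are not strongly regular are those with two minimizers
(countably many) and those with a degenerate minimizer (critical values). -/
theorem null_slice {a0 a T xT d1 d2 s : ℝ} (ha : a ≠ 0) (h12 : d1 < d2) (hs : s < T)
    (h1 : ∀ x ∈ Ioo d1 d2, ∀ t ∈ Icc s T, gap a (a0 / a) T (xT + a0 / a) x s d1 t < 0)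
    (h2 : ∀ x ∈ Ioo d1 d2, ∀ t ∈ Icc s T, 0 < gap a (a0 / a) T (xT + a0 / a) x s d2 t) :
    MeasureTheory.volume {x ∈ Ioo d1 d2 |
      ¬ ∃ d t, StronglyRegularAt a0 a T xT d1 d2 x s d t} = 0 := by
  have N0 := (countable_opt_ties (a0 := a0) (xT := xT) ha h12 hs h1 h2).measure_zero
    MeasureTheory.volume
  have N1 := degenerate_null (c := a0 / a) (T := T) (z := xT + a0 / a) (s := s) (d := d1) ha
  have N2 := degenerate_null (c := a0 / a) (T := T) (z := xT + a0 / a) (s := s) (d := d2) ha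
  refine MeasureTheory.measure_mono_null ?_ (MeasureTheory.measure_union_null N0
    (MeasureTheory.measure_union_null N1 N2))
  rintro x ⟨hx, hnot⟩
  have hg : ∀ d, (d = d1 ∨ d = d2) → ∀ t ∈ Icc s T,
      gap a (a0 / a) T (xT + a0 / a) x s d t ≠ 0 := by
    rintro d (rfl | rfl) t ht
    · exact (h1 x hx t ht).ne
    · exact (h2 x hx t ht).ne'
  obtain ⟨d, t, ho⟩ := exists_isOpt (a0 := a0) (xT := xT) (d1 := d1) (d2 := d2) ha hs hg
  have hgt := hg d ho.1 t (Ioo_subset_Icc_self ho.2.1)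
  by_cases hu : ∀ d' t', IsOpt a0 a T xT d1 d2 x s d' t' → (d', t') = (d, t)
  · right
    have hpos := fun h => hnot ⟨d, t, ho.stronglyRegularAt ha hgt hu h⟩
    have hdeg := crit_degenerate ha hgt ho hpos
    rcases ho.1 with rfl | rfl
    · exact Or.inl ⟨t, ho.2.1, hdeg⟩
    · exact Or.inr ⟨t, ho.2.1, hdeg⟩
  · push Not at hu
    obtain ⟨d', t', ho', hne⟩ := hu
    exact Or.inl ⟨hx, d, t, d', t', hne, ho, ho'⟩

end

theorem stmt_16 (a0 a1 T xT d1 d2 : ℝ) (ha1 : a1 ≠ 0) (hT : 0 < T)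
    (h1 : d1 < xT) (h2 : xT < d2)
    (hint : ∀ x ∈ Set.Ioo d1 d2, ∀ s, 0 ≤ s → s < T →
      ∀ t ∈ Set.Icc s T, traj a0 a1 T xT x s t ∈ Set.Ioo d1 d2) :
    (∃ V : Set (ℝ × ℝ), IsOpen V ∧
      {p : ℝ × ℝ | p ∈ Set.Ioo d1 d2 ×ˢ Set.Ico 0 T ∧
        ∃ dm νm, StronglyRegularAt a0 a1 T xT d1 d2 p.1 p.2 dm νm} =
        V ∩ Set.Ioo d1 d2 ×ˢ Set.Ico 0 T) ∧
    Set.Ioo d1 d2 ×ˢ Set.Ico 0 T ⊆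
      closure {p : ℝ × ℝ | p ∈ Set.Ioo d1 d2 ×ˢ Set.Ico 0 T ∧
        ∃ dm νm, StronglyRegularAt a0 a1 T xT d1 d2 p.1 p.2 dm νm} ∧
    MeasureTheory.volume
      (Set.Ioo d1 d2 ×ˢ Set.Ico 0 T \
        {p : ℝ × ℝ | p ∈ Set.Ioo d1 d2 ×ˢ Set.Ico 0 T ∧
          ∃ dm νm, StronglyRegularAt a0 a1 T xT d1 d2 p.1 p.2 dm νm}) = 0 := by
  have h12 : d1 < d2 := h1.trans h2
  have hg1 : ∀ x ∈ Set.Ioo d1 d2, ∀ s, 0 ≤ s → s < T → ∀ t ∈ Set.Icc s T,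
      gap a1 (a0 / a1) T (xT + a0 / a1) x s d1 t < 0 := by
    intro x hx s h0 hs t ht
    have h := sub_neg.2 (hint x hx s h0 hs t ht).1
    rw [sub_traj ha1 hs] at h
    exact (div_neg_iff.1 h).elim (fun h => absurd h.2 (nsinh_pos ha1 (sub_pos.2 hs)).not_gt)
      (fun h => h.1)
  have hg2 : ∀ x ∈ Set.Ioo d1 d2, ∀ s, 0 ≤ s → s < T → ∀ t ∈ Set.Icc s T,
      0 < gap a1 (a0 / a1) T (xT + a0 / a1) x s d2 t := by
    intro x hx s h0 hs t ht
    have h := sub_pos.2 (hint x hx s h0 hs t ht).2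
    rw [sub_traj ha1 hs] at h
    exact (div_pos_iff_of_pos_right (nsinh_pos ha1 (sub_pos.2 hs))).1 h
  have hg : ∀ x ∈ Set.Ioo d1 d2, ∀ s, 0 ≤ s → s < T → ∀ d, (d = d1 ∨ d = d2) →
      ∀ t ∈ Set.Icc s T, gap a1 (a0 / a1) T (xT + a0 / a1) x s d t ≠ 0 := by
    rintro x hx s h0 hs d (rfl | rfl) t ht
    · exact (hg1 x hx s h0 hs t ht).ne
    · exact (hg2 x hx s h0 hs t ht).ne'
  set W : Set (ℝ × ℝ) := Set.Ioo d1 d2 ×ˢ Set.Ico 0 T with hW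
  set R : Set (ℝ × ℝ) := {p : ℝ × ℝ | p ∈ W ∧
    ∃ dm νm, StronglyRegularAt a0 a1 T xT d1 d2 p.1 p.2 dm νm} with hR
  have hopen : ∃ V : Set (ℝ × ℝ), IsOpen V ∧ R = V ∩ W := by
    -- the largest open set whose trace on `W` is contained in `R`
    refine ⟨interior (R ∪ Wᶜ), isOpen_interior, ?_⟩
    ext p
    constructor
    · rintro ⟨hp, d, t, h⟩
      refine ⟨mem_interior_iff_mem_nhds.2 ?_, hp⟩
      filter_upwards [eventually_stronglyRegular ha1 hg hp h] with q hq
      by_cases hqW : q ∈ W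
      · exact Or.inl ⟨hqW, hq hqW⟩
      · exact Or.inr hqW
    · rintro ⟨hp, hpW⟩
      exact (interior_subset hp).resolve_right fun h => h hpW
  have hnull : MeasureTheory.volume (W \ R) = 0 := by
    obtain ⟨V, hV, hRV⟩ := hopen
    have hWm : MeasurableSet W := measurableSet_Ioo.prod measurableSet_Ico
    have hm : MeasurableSet (W \ R) := by
      rw [hRV]
      exact hWm.diff (hV.measurableSet.inter hWm)
    rw [MeasureTheory.Measure.volume_eq_prod, MeasureTheory.Measure.prod_apply_symm hm]
    refine (MeasureTheory.lintegral_congr fun s => ?_).trans MeasureTheory.lintegral_zero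
    by_cases hs : s ∈ Set.Ico 0 T
    · refine MeasureTheory.measure_mono_null ?_ (null_slice (a0 := a0) (xT := xT) ha1 h12 hs.2
        (fun x hx => hg1 x hx s hs.1 hs.2) (fun x hx => hg2 x hx s hs.1 hs.2))
      rintro x ⟨hx, hnot⟩
      exact ⟨hx.1, fun h => hnot ⟨hx, h⟩⟩
    · refine MeasureTheory.measure_mono_null ?_ MeasureTheory.measure_empty
      rintro x ⟨hx, -⟩
      exact hs hx.2
  refine ⟨hopen, ?_, hnull⟩
  have hO : Set.Ioo d1 d2 ×ˢ Set.Ioo 0 T ⊆ closure R := by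
    by_contra hcon
    obtain ⟨p, hp, hpR⟩ := Set.not_subset.1 hcon
    have ho : IsOpen ((Set.Ioo d1 d2 ×ˢ Set.Ioo 0 T) \ closure R) :=
      (isOpen_Ioo.prod isOpen_Ioo).sdiff isClosed_closure
    refine (ho.measure_pos MeasureTheory.volume ⟨p, hp, hpR⟩).ne' ?_
    refine MeasureTheory.measure_mono_null ?_ hnull
    rintro q ⟨hq, hqR⟩
    exact ⟨⟨hq.1, Set.Ioo_subset_Ico_self hq.2⟩, fun h => hqR (subset_closure h)⟩
  refine Set.Subset.trans ?_ (closure_minimal hO isClosed_closure)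
  rw [closure_prod_eq, closure_Ioo h12.ne, closure_Ioo hT.ne]
  exact Set.prod_mono Set.Ioo_subset_Icc_self Set.Ico_subset_Icc_self
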